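/- arXiv:1202.0028 — 9 statements merged into one kernel-verified Lean document; each statement's English description precedes it below -/
import Mathlib

section
/- For all natural numbers n and λ, the coefficient of x^(n+λ) in (1+x+x^2)^n satisfies T(n,n+λ) = ∑_{α=0}^{n} C(λ+2α, α) · C(n, λ+2α), where C denotes the binomial coefficient (with C(m,j) = 0 when j > m). In particular, the central trinomial coefficient is p_n = ∑_{α} C(2α,α) · C(n,2α). -/
/-!
Expand `((1 + x²) + x)ⁿ = ∑ m, C(n, m) (1 + x²)ᵐ xⁿ⁻ᵐ`. The coefficient of `xⁿ⁺ˡ` in the `m`-th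
term is `C(n, m)` times the coefficient of `xᵐ⁺ˡ` in `(1 + x²)ᵐ`. The latter vanishes unless
`m = l + 2α` for some `α`, and then it is `C(m, l + α) = C(m, α)`.
-/

open Polynomial

/-- `T n k` is the coefficient of `x^k` in `(1 + x + x^2)^n` over `ℤ`. -/
noncomputable def T (n k : ℕ) : ℤ := (((1 + X + X ^ 2 : ℤ[X])) ^ n).coeff k

theorem sum_range_comp_of_strictMono {M : Type*} [AddCommMonoid M] {f : ℕ → M} {g : ℕ → ℕ} {N : ℕ}
    (hg : StrictMono g) (hf_range : ∀ m ∉ Set.range g, f m = 0) (hf_ge : ∀ m ≥ N, f m = 0) :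
    ∑ i ∈ Finset.range N, f (g i) = ∑ m ∈ Finset.range N, f m := by
  rw [← Finset.sum_image hg.injective.injOn]
  refine Finset.sum_congr_of_eq_on_inter (fun m _ hm => hf_ge m (by simpa using hm)) ?_
    fun _ _ _ => rfl
  intro m hmN hm
  refine hf_range m ?_
  rintro ⟨i, rfl⟩
  have hiN : i < N := (hg.id_le i).trans_lt (Finset.mem_range.mp hmN)
  exact hm (Finset.mem_image_of_mem g (Finset.mem_range.mpr hiN))

section Semiring

variable {R : Type*} [Semiring R]

theorem coeff_add_X_pow_add (p : R[X]) (n l : ℕ) :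
    ((p + X) ^ n).coeff (n + l) =
      ∑ m ∈ Finset.range (n + 1), (p ^ m).coeff (m + l) * (n.choose m : R) := by
  rw [(commute_X p).symm.add_pow, finsetSum_coeff]
  refine Finset.sum_congr rfl fun m hm => ?_
  have hmn : m ≤ n := Finset.mem_range_succ_iff.mp hm
  rw [coeff_mul_natCast, show n + l = (m + l) + (n - m) by omega, coeff_mul_X_pow]

variable (R)

theorem coeff_one_add_X_pow_pow {d : ℕ} (hd : 0 < d) (m k : ℕ) :
    ((1 + X ^ d : R[X]) ^ m).coeff k = if d ∣ k then (m.choose (k / d) : R) else 0 := by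
  -- `expand` needs commutative coefficients, so transport the expansion from `ℕ`.
  have h : (1 + X ^ d : R[X]) ^ m = (expand ℕ d ((1 + X) ^ m)).map (Nat.castRingHom R) := by
    simp
  rw [h, coeff_map, coeff_expand hd, coeff_one_add_X_pow]
  split_ifs <;> simp

theorem coeff_one_add_X_sq_pow_add_two_mul (l α : ℕ) :
    ((1 + X ^ 2 : R[X]) ^ (l + 2 * α)).coeff (l + 2 * α + l) = ((l + 2 * α).choose α : R) := by
  rw [show l + 2 * α + l = 2 * (l + α) by ring, coeff_one_add_X_pow_pow R two_pos,
    if_pos (dvd_mul_right 2 _), Nat.mul_div_cancel_left _ two_pos,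
    Nat.choose_symm_of_eq_add (show l + 2 * α = l + α + α by ring)]

theorem coeff_one_add_X_sq_pow_eq_zero {m l : ℕ} (hm : m ∉ Set.range fun α => l + 2 * α) :
    ((1 + X ^ 2 : R[X]) ^ m).coeff (m + l) = 0 := by
  rw [coeff_one_add_X_pow_pow R two_pos]
  split_ifs with heven
  · have hml : m < l := by
      by_contra! hlm
      exact hm ⟨(m - l) / 2, by dsimp only; omega⟩
    rw [Nat.choose_eq_zero_of_lt (by omega), Nat.cast_zero]
  · rfl

theorem trinomial_coeff_eq_sum_central_binomials_general (n l : ℕ) :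
    ((1 + X + X ^ 2 : R[X]) ^ n).coeff (n + l) = ∑ α ∈ Finset.range (n + 1),
      ((l + 2 * α).choose α : R) * (n.choose (l + 2 * α) : R) := by
  have hmono : StrictMono fun α : ℕ => l + 2 * α := fun _ _ _ => by dsimp only; omega
  calc ((1 + X + X ^ 2 : R[X]) ^ n).coeff (n + l)
      = ∑ m ∈ Finset.range (n + 1),
          ((1 + X ^ 2 : R[X]) ^ m).coeff (m + l) * (n.choose m : R) := by
        rw [add_right_comm, coeff_add_X_pow_add]
    _ = ∑ α ∈ Finset.range (n + 1), ((1 + X ^ 2 : R[X]) ^ (l + 2 * α)).coeff (l + 2 * α + l) *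
          (n.choose (l + 2 * α) : R) := by
        refine (sum_range_comp_of_strictMono hmono (fun m hm => ?_) fun m hm => ?_).symm
        · rw [coeff_one_add_X_sq_pow_eq_zero R hm, zero_mul]
        · rw [Nat.choose_eq_zero_of_lt hm, Nat.cast_zero, mul_zero]
    _ = ∑ α ∈ Finset.range (n + 1),
          ((l + 2 * α).choose α : R) * (n.choose (l + 2 * α) : R) := by
        simp only [coeff_one_add_X_sq_pow_add_two_mul]

end Semiring

theorem trinomial_coeff_eq_sum_central_binomials (n lam : ℕ) :
    T n (n + lam) = ∑ α ∈ Finset.range (n + 1),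
      ((lam + 2 * α).choose α : ℤ) * (n.choose (lam + 2 * α) : ℤ) :=
  trinomial_coeff_eq_sum_central_binomials_general ℤ n lam
end

section
/- The central trinomial coefficients satisfy the three-term recurrence (n+2) · p_{n+2} = (2n+3) · p_{n+1} + 3(n+1) · p_n for every natural number n. -/
/-!
With `Q = a + b x + c x²` and `H = (a - c x²) Q ^ (n + 1)`, the combination
`(n + 2) Q ^ (n + 2) - (2 n + 3) b x Q ^ (n + 1) + (n + 1) (b² - 4 a c) x² Q ^ n`
equals `(n + 2) H - x H'`. The operator `x d/dx` multiplies the coefficient of `x ^ (n + 2)` by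
`n + 2`, so that coefficient of the combination vanishes; `a = b = c = 1` is the recurrence sought.
The multiplier `a - c x²` is found by comparing coefficients in `s Q ^ (n + 1)` for an unknown
quadratic `s`.
-/

open Polynomial

/-- The central trinomial coefficient. -/
noncomputable def p (n : ℕ) : ℤ := T n n

lemma coeff_X_mul_derivative {R : Type*} [Semiring R] (f : R[X]) (k : ℕ) :
    (X * derivative f).coeff k = f.coeff k * k := by
  cases k with
  | zero => simp
  | succ k => rw [coeff_X_mul, coeff_derivative, Nat.cast_succ]

lemma coeff_natCast_mul_sub_X_mul_derivative_self {R : Type*} [Ring R] (f : R[X]) (k : ℕ) :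
    ((k : R[X]) * f - X * derivative f).coeff k = 0 := by
  rw [coeff_sub, coeff_natCast_mul, coeff_X_mul_derivative, Nat.cast_comm, sub_self]

section Trinomial

variable {R : Type*} [CommRing R]

/-- The generalized central trinomial coefficient: the coefficient of `x ^ n` in
`(a + b x + c x²) ^ n`. The central trinomial coefficients are the case `a = b = c = 1`. -/
noncomputable def centralTrinomialCoeff (a b c : R) (n : ℕ) : R :=
  ((C a + C b * X + C c * X ^ 2) ^ n).coeff n

lemma quadratic_pow_combination_eq_natCast_mul_sub_X_mul_derivative (a b c : R) (n : ℕ) :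
    let Q : R[X] := C a + C b * X + C c * X ^ 2
    let H : R[X] := (C a - C c * X ^ 2) * Q ^ (n + 1)
    C (n + 2 : R) * Q ^ (n + 2) - C ((2 * n + 3) * b) * (Q ^ (n + 1) * X)
        + C ((n + 1) * (b ^ 2 - 4 * a * c)) * (Q ^ n * X ^ 2)
      = ((n + 2 : ℕ) : R[X]) * H - X * derivative H := by
  intro Q H
  have derivative_Q : derivative Q = C b + 2 * C c * X := by
    rw [derivative_add, derivative_add, derivative_C, derivative_C_mul_X, derivative_C_mul_X_sq,
      C_mul, map_ofNat]
    ring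
  have derivative_H : derivative H
      = -(2 * C c * X) * Q ^ (n + 1)
        + (C a - C c * X ^ 2) * ((n + 1 : R[X]) * Q ^ n * (C b + 2 * C c * X)) := by
    rw [derivative_mul, derivative_pow_succ, derivative_Q, derivative_sub, derivative_C,
      derivative_C_mul_X_sq, C_mul, C_add, map_natCast, map_ofNat, C_1]
    ring
  rw [derivative_H]
  simp only [H, Q, map_add, map_sub, map_mul, map_pow, map_natCast, map_ofNat, map_one,
    Nat.cast_add, Nat.cast_ofNat]
  ring

theorem central_trinomial_three_term_recurrence_general (a b c : R) (n : ℕ) :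
    (n + 2) * centralTrinomialCoeff a b c (n + 2)
      = (2 * n + 3) * b * centralTrinomialCoeff a b c (n + 1)
        - (n + 1) * (b ^ 2 - 4 * a * c) * centralTrinomialCoeff a b c n := by
  have h := coeff_natCast_mul_sub_X_mul_derivative_self
    ((C a - C c * X ^ 2) * (C a + C b * X + C c * X ^ 2) ^ (n + 1)) (n + 2)
  rw [← quadratic_pow_combination_eq_natCast_mul_sub_X_mul_derivative] at h
  simp only [coeff_add, coeff_sub, coeff_C_mul, coeff_mul_X, coeff_mul_X_pow] at h
  unfold centralTrinomialCoeff
  linear_combination h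

end Trinomial

lemma p_eq_centralTrinomialCoeff (n : ℕ) : p n = centralTrinomialCoeff 1 1 1 n := by
  simp only [p, T, centralTrinomialCoeff, map_one, one_mul]

theorem central_trinomial_three_term_recurrence (n : ℕ) :
    (n + 2 : ℤ) * p (n + 2) = (2 * n + 3 : ℤ) * p (n + 1) + 3 * (n + 1 : ℤ) * p n := by
  simp only [p_eq_centralTrinomialCoeff]
  linear_combination central_trinomial_three_term_recurrence_general (1 : ℤ) 1 1 n
end

section
/- For all natural numbers n and λ, the coefficients z_n := T(n, n+λ) satisfy the three-term recurrence ((n+2)^2 − λ^2) · z_{n+2} = (n+2) · ((2n+3) · z_{n+1} + 3(n+1) · z_n). -/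
open Polynomial

/-!
Let `θ = x · d/dx`. The operator `θ - N` multiplies the coefficient of `x^(N + λ)` by `λ`, and for
`P = a + b x + c x²` two applications of the Leibniz rule express `(θ - N)² P^N` through
`u = (θ - 1) P = c x² - a`. Eliminating `u` with `(θ - 1) u = P - b x` and
`u² = P² - 2 b x P + (b² - 4 a c) x²` leaves only `P^N`, `x P^(N-1)` and `x² P^(N-2)`; comparing
coefficients of `x^(N + λ)` gives the recurrence.
-/

section ShiftedEuler

variable {R : Type*} [CommRing R]

/-- The Euler operator `x · d/dx` shifted by the scalar `r`, that is `f ↦ x f' - r f`. With `r = N`,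
it acts on the coefficient of `x^(N + λ)` as multiplication by `λ`. -/
noncomputable def shiftedEuler (r : R) : R[X] →ₗ[R] R[X] :=
  LinearMap.mulLeft R X ∘ₗ derivative - r • LinearMap.id

theorem shiftedEuler_apply (r : R) (f : R[X]) :
    shiftedEuler r f = X * derivative f - C r * f := by
  simp [shiftedEuler, smul_eq_C_mul]

theorem coeff_shiftedEuler (r : R) (f : R[X]) (k : ℕ) :
    (shiftedEuler r f).coeff k = (k - r) * f.coeff k := by
  rw [shiftedEuler_apply, coeff_sub, coeff_C_mul]
  cases k with
  | zero => simp
  | succ k =>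
    rw [coeff_X_mul, coeff_derivative]
    push_cast
    ring

theorem shiftedEuler_mul (r s : R) (f g : R[X]) :
    shiftedEuler (r + s) (f * g) = shiftedEuler r f * g + f * shiftedEuler s g := by
  simp only [shiftedEuler_apply, derivative_mul, C_add]
  ring

theorem shiftedEuler_pow_succ (r : R) (f : R[X]) (n : ℕ) :
    shiftedEuler ((n + 1) * r) (f ^ (n + 1)) = (n + 1 : R) • (f ^ n * shiftedEuler r f) := by
  simp only [shiftedEuler_apply, derivative_pow_succ, smul_eq_C_mul, C_mul]
  ring

theorem shiftedEuler_shiftedEuler_pow (r : R) (f : R[X]) (n : ℕ) :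
    shiftedEuler ((n + 2) * r) (shiftedEuler ((n + 2) * r) (f ^ (n + 2))) =
      (n + 2 : R) • ((n + 1 : R) • (f ^ n * shiftedEuler r f ^ 2) +
        f ^ (n + 1) * shiftedEuler r (shiftedEuler r f)) := by
  have shiftedEuler_pow : shiftedEuler ((n + 2) * r) (f ^ (n + 2)) =
      (n + 2 : R) • (f ^ (n + 1) * shiftedEuler r f) := by
    simpa [add_assoc, one_add_one_eq_two] using shiftedEuler_pow_succ r f (n + 1)
  have split_shift : (n + 2) * r = (n + 1) * r + r := by ring
  rw [shiftedEuler_pow, map_smul, split_shift, shiftedEuler_mul, shiftedEuler_pow_succ,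
    smul_mul_assoc, mul_assoc, ← sq]

end ShiftedEuler

section Quadratic

variable {R : Type*} [CommRing R] (a b c : R)

/-- The polynomial `a + b x + c x²`, whose powers generate the trinomial coefficients when
`a = b = c = 1`. The coefficients are listed in increasing degree, so its discriminant is
`discrim c b a`. -/
noncomputable def quadratic : R[X] :=
  C a + C b * X + C c * X ^ 2

theorem shiftedEuler_one_quadratic :
    shiftedEuler 1 (quadratic a b c) = C c * X ^ 2 - C a := by
  simp only [quadratic, shiftedEuler_apply, derivative_add, derivative_C, derivative_C_mul,
    derivative_X, derivative_X_sq, C_1, C_ofNat]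
  ring

theorem shiftedEuler_one_shiftedEuler_one_quadratic :
    shiftedEuler 1 (shiftedEuler 1 (quadratic a b c)) = quadratic a b c - C b * X := by
  rw [shiftedEuler_one_quadratic]
  simp only [quadratic, shiftedEuler_apply, derivative_sub, derivative_C, derivative_C_mul,
    derivative_X_sq, C_1, C_ofNat]
  ring

theorem shiftedEuler_one_quadratic_sq :
    shiftedEuler 1 (quadratic a b c) ^ 2 =
      quadratic a b c ^ 2 - 2 * C b * X * quadratic a b c + C (discrim c b a) * X ^ 2 := by
  rw [shiftedEuler_one_quadratic]
  simp only [quadratic, discrim, C_sub, C_mul, C_pow, C_ofNat]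
  ring

theorem shiftedEuler_shiftedEuler_quadratic_pow (n : ℕ) :
    shiftedEuler (n + 2 : R) (shiftedEuler (n + 2 : R) (quadratic a b c ^ (n + 2))) =
      C ((n + 2 : R) ^ 2) * quadratic a b c ^ (n + 2) -
        C (n + 2 : R) * (C ((2 * n + 3) * b) * (quadratic a b c ^ (n + 1) * X) -
          C ((n + 1) * discrim c b a) * (quadratic a b c ^ n * X ^ 2)) := by
  have h := shiftedEuler_shiftedEuler_pow 1 (quadratic a b c) n
  rw [mul_one, shiftedEuler_one_shiftedEuler_one_quadratic, shiftedEuler_one_quadratic_sq] at h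
  rw [h]
  simp only [smul_eq_C_mul, C_add, C_mul, C_pow, C_ofNat, C_1]
  ring

theorem trinomial_diagonal_three_term_recurrence_general (n k : ℕ) :
    ((n + 2 : R) ^ 2 - (k - n : R) ^ 2) * (quadratic a b c ^ (n + 2)).coeff (k + 2) =
      (n + 2 : R) * ((2 * n + 3) * b * (quadratic a b c ^ (n + 1)).coeff (k + 1) -
        (n + 1) * discrim c b a * (quadratic a b c ^ n).coeff k) := by
  have h := congrArg (coeff · (k + 2)) (shiftedEuler_shiftedEuler_quadratic_pow a b c n)
  simp only [coeff_shiftedEuler, coeff_sub, coeff_C_mul, coeff_mul_X, coeff_mul_X_pow] at h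
  push_cast at h
  linear_combination -h

end Quadratic

theorem T_eq_coeff_quadratic_pow (n k : ℕ) : T n k = (quadratic (1 : ℤ) 1 1 ^ n).coeff k := by
  simp only [T, quadratic, C_1, one_mul]

theorem trinomial_diagonal_three_term_recurrence (n lam : ℕ) :
    ((n + 2 : ℤ) ^ 2 - (lam : ℤ) ^ 2) * T (n + 2) (n + 2 + lam) =
      (n + 2 : ℤ) * ((2 * n + 3 : ℤ) * T (n + 1) (n + 1 + lam)
        + 3 * (n + 1 : ℤ) * T n (n + lam)) := by
  simpa [T_eq_coeff_quadratic_pow, discrim, add_right_comm n, mul_comm (3 : ℤ)] using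
    trinomial_diagonal_three_term_recurrence_general (1 : ℤ) 1 1 n (n + lam)
end

section
/- For every natural number n and every natural number λ ≥ 1, twice the coefficient of x^(n+λ) in (1+x+x^2)^n is given by the finite-difference formula 2 · T(n, n+λ) = ∑_{j=0}^{⌊λ/2⌋} (−1)^j · (λ/(λ−j)) · C(λ−j, j) · Δ^{λ−2j} p_n, where Δ^m p_n := ∑_{i=0}^{m} (−1)^{m−i} C(m,i) p_{n+i} is the m-th forward difference of the central trinomial coefficients, and the equation is read in the rationals. -/
/-!
Put `q = 1 + X + X²`. Expanding `(q - X)^m` by the binomial theorem shows that `Δ^m p_n` is the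
coefficient of `X^(n+m)` in `(q - X)^m q^n = (1 + X²)^m q^n`. The Girard–Waring formula expresses
`a^l + b^l` through `ab` and `a + b`. Take `a = 1` and `b = X²`, multiply by `q^n` and compare the
coefficients of `X^(n+l)`: the right-hand side is a signed sum of the differences `Δ^(l-2j) p_n`,
and the left-hand side is `2 T(n, n+l)`, since `q^n` is palindromic of degree `2n`.
-/

open Polynomial

/-- The `m`-th forward difference of a sequence `a : ℕ → ℤ` at `n`. -/
def forwardDiff (a : ℕ → ℤ) (m n : ℕ) : ℤ :=
  ∑ i ∈ Finset.range (m + 1), (-1 : ℤ) ^ (m - i) * (m.choose i : ℤ) * a (n + i)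

/-- The coefficients of the Lucas polynomials, which are the absolute values of the coefficients in
the Girard–Waring formula for `a ^ l + b ^ l`. They are defined by the recurrence that
`a ^ (l + 2) + b ^ (l + 2) = (a + b) * (a ^ (l + 1) + b ^ (l + 1)) - a * b * (a ^ l + b ^ l)`
imposes on them, so that no division occurs; the entry at `(0, 0)` is `2 = a ^ 0 + b ^ 0`. -/
def lucasCoeff : ℕ → ℕ → ℕ
  | 0, 0 => 2
  | _ + 1, 0 => 1
  | 0, _ + 1 => 0
  | 1, _ + 1 => 0
  | l + 2, j + 1 => lucasCoeff (l + 1) (j + 1) + lucasCoeff l j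

namespace lucasCoeff

lemma eq_zero_of_lt : ∀ {l j : ℕ}, l < 2 * j → lucasCoeff l j = 0
  | 0, _ + 1, _ => by simp only [lucasCoeff]
  | 1, _ + 1, _ => by simp only [lucasCoeff]
  | l + 2, j + 1, h => by
    simp only [lucasCoeff, eq_zero_of_lt (show l + 1 < 2 * (j + 1) by omega),
      eq_zero_of_lt (show l < 2 * j by omega)]

/-- In the coordinates `(i, j)`, where `i = l - 2j`, the recurrence is Pascal's rule. -/
lemma add_two_mul_eq_choose_add_choose :
    ∀ i j : ℕ, lucasCoeff (i + 2 * j) j = (i + j).choose i + (i + j - 1).choose i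
  | 0, 0 => by simp [lucasCoeff]
  | i + 1, 0 => by simp [lucasCoeff]
  | 0, j + 1 => by
    have ih := add_two_mul_eq_choose_add_choose 0 j
    rw [show 0 + 2 * (j + 1) = 0 + 2 * j + 2 by ring, lucasCoeff, ih,
      eq_zero_of_lt (by omega)]
    simp
  | i + 1, j + 1 => by
    have ih_left := add_two_mul_eq_choose_add_choose i (j + 1)
    have ih_right := add_two_mul_eq_choose_add_choose (i + 1) j
    rw [show i + 1 + 2 * (j + 1) = i + 1 + 2 * j + 2 by ring, lucasCoeff, ih_right,
      show i + 1 + 2 * j + 1 = i + 2 * (j + 1) by ring, ih_left,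
      show i + 1 + (j + 1) = i + j + 1 + 1 by ring, show i + (j + 1) = i + j + 1 by ring,
      show i + 1 + j = i + j + 1 by ring]
    simp only [Nat.add_sub_cancel, Nat.choose_succ_succ]
    ring

lemma add_mul_eq_add_two_mul_mul_choose (i j : ℕ) :
    (i + j) * lucasCoeff (i + 2 * j) j = (i + 2 * j) * (i + j).choose j := by
  rw [add_two_mul_eq_choose_add_choose, Nat.choose_symm_add]
  cases j with
  | zero => cases i <;> simp
  | succ j =>
    have absorption : (i + j + 1) * (i + j).choose j = (i + j + 1).choose (j + 1) * (j + 1) :=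
      Nat.add_one_mul_choose_eq (i + j) j
    rw [← add_assoc, Nat.add_sub_cancel, Nat.choose_symm_add, mul_add, absorption]
    ring

lemma cast_eq_div_mul_choose (K : Type*) [Field K] [CharZero K] {l j : ℕ} (hl : 1 ≤ l)
    (hj : 2 * j ≤ l) : (lucasCoeff l j : K) = l / (l - j) * (l - j).choose j := by
  obtain ⟨i, rfl⟩ := Nat.exists_eq_add_of_le' hj
  have h_ne : ((i + j : ℕ) : K) ≠ 0 := Nat.cast_ne_zero.mpr (by omega)
  have h_sub : i + 2 * j - j = i + j := by omega
  rw [← Nat.cast_sub (by omega), h_sub, div_mul_eq_mul_div, eq_div_iff h_ne, mul_comm]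
  exact_mod_cast add_mul_eq_add_two_mul_mul_choose i j

end lucasCoeff

/-- The number `N` of terms is left free because the induction compares consecutive values of `l`,
for which the numbers of nonzero terms differ. -/
lemma sum_lucasCoeff_mul_eq_pow_add_pow {R : Type*} [CommRing R] (a b : R) :
    ∀ {l N : ℕ}, l < 2 * N →
      ∑ j ∈ Finset.range N,
        (-1) ^ j * (lucasCoeff l j : R) * ((a * b) ^ j * (a + b) ^ (l - 2 * j)) = a ^ l + b ^ l
  | 0, N + 1, _ => by
    rw [Finset.sum_range_succ']
    simp [lucasCoeff, one_add_one_eq_two]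
  | 1, N + 1, _ => by
    rw [Finset.sum_range_succ']
    simp [lucasCoeff]
  | l + 2, N + 1, h => by
    have ih_succ := sum_lucasCoeff_mul_eq_pow_add_pow a b (show l + 1 < 2 * (N + 1) by omega)
    have ih := sum_lucasCoeff_mul_eq_pow_add_pow a b (show l < 2 * N by omega)
    have coeff_mul_pow_sub (j : ℕ) : (lucasCoeff (l + 1) (j + 1) : R) * (a + b) ^ (l - 2 * j) =
        (a + b) * (lucasCoeff (l + 1) (j + 1) * (a + b) ^ (l + 1 - 2 * (j + 1))) := by
      rcases lt_or_ge (l + 1) (2 * (j + 1)) with hj | hj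
      · simp [lucasCoeff.eq_zero_of_lt hj]
      · rw [show l - 2 * j = l + 1 - 2 * (j + 1) + 1 by omega]
        ring
    have power_sum_recurrence : a ^ (l + 2) + b ^ (l + 2) =
        (a + b) * (a ^ (l + 1) + b ^ (l + 1)) - a * b * (a ^ l + b ^ l) := by ring
    rw [power_sum_recurrence, ← ih_succ, ← ih, Finset.sum_range_succ', Finset.sum_range_succ',
      mul_add, Finset.mul_sum, Finset.mul_sum, add_sub_right_comm, ← Finset.sum_sub_distrib]
    congr 1
    · refine Finset.sum_congr rfl fun j _ => ?_
      rw [show l + 2 - 2 * (j + 1) = l - 2 * j by omega, lucasCoeff]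
      push_cast
      linear_combination (-1) ^ (j + 1) * (a * b) ^ (j + 1) * coeff_mul_pow_sub j
    · simp only [lucasCoeff, mul_zero, Nat.sub_zero]
      ring

lemma forwardDiff_coeff_pow (q : ℤ[X]) (m n : ℕ) :
    forwardDiff (fun k => (q ^ k).coeff k) m n = ((q - X) ^ m * q ^ n).coeff (n + m) := by
  rw [sub_eq_add_neg, add_pow, Finset.sum_mul, finsetSum_coeff, forwardDiff]
  refine Finset.sum_congr rfl fun i hi => ?_
  have him : i ≤ m := Finset.mem_range_succ_iff.mp hi
  have term_eq : q ^ i * (-X) ^ (m - i) * (m.choose i : ℤ[X]) * q ^ n =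
      C ((-1) ^ (m - i) * (m.choose i : ℤ)) * (q ^ (n + i) * X ^ (m - i)) := by
    rw [neg_pow (X : ℤ[X])]
    simp only [map_mul, map_pow, map_neg, map_one, map_natCast]
    ring
  rw [term_eq, coeff_C_mul, show n + m = n + i + (m - i) by omega, coeff_mul_X_pow]

lemma forwardDiff_p (m n : ℕ) :
    forwardDiff p m n = ((1 + X ^ 2 : ℤ[X]) ^ m * (1 + X + X ^ 2) ^ n).coeff (n + m) := by
  rw [show (1 + X ^ 2 : ℤ[X]) = 1 + X + X ^ 2 - X by ring]
  exact forwardDiff_coeff_pow _ m n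

lemma reverse_pow_of_domain {R : Type*} [Semiring R] [NoZeroDivisors R] (q : R[X]) (n : ℕ) :
    (q ^ n).reverse = q.reverse ^ n := by
  induction n with
  | zero => simpa using reverse_C (1 : R)
  | succ n ih => rw [pow_succ, reverse_mul_of_domain, ih, pow_succ]

lemma coeff_eq_coeff_of_reverse_eq_self {R : Type*} [Semiring R] {q : R[X]} (hq : q.reverse = q)
    {i j : ℕ} (h : i + j = q.natDegree) : q.coeff i = q.coeff j := by
  rw [← hq, coeff_reverse, revAt_le (by omega), ← h, Nat.add_sub_cancel_left, hq]

lemma natDegree_trinomial : (1 + X + X ^ 2 : ℤ[X]).natDegree = 2 := by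
  compute_degree!

lemma natDegree_trinomial_pow (n : ℕ) : ((1 + X + X ^ 2 : ℤ[X]) ^ n).natDegree = 2 * n := by
  rw [natDegree_pow, natDegree_trinomial, mul_comm]

lemma reverse_trinomial : (1 + X + X ^ 2 : ℤ[X]).reverse = 1 + X + X ^ 2 := by
  ext k
  rw [coeff_reverse, natDegree_trinomial]
  rcases lt_or_ge 2 k with hk | hk
  · rw [revAt_eq_self_of_lt hk]
  · rw [revAt_le hk]
    interval_cases k <;> simp [coeff_one, coeff_X, coeff_X_pow]

lemma T_symm {n i j : ℕ} (h : i + j = 2 * n) : T n i = T n j :=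
  coeff_eq_coeff_of_reverse_eq_self (by rw [reverse_pow_of_domain, reverse_trinomial])
    (h.trans (natDegree_trinomial_pow n).symm)

lemma T_eq_zero_of_lt {n k : ℕ} (h : 2 * n < k) : T n k = 0 :=
  coeff_eq_zero_of_natDegree_lt (by rwa [natDegree_trinomial_pow])

lemma coeff_one_add_X_pow_mul_trinomial_pow (n l : ℕ) :
    ((1 + X ^ (2 * l) : ℤ[X]) * (1 + X + X ^ 2) ^ n).coeff (n + l) = 2 * T n (n + l) := by
  rw [add_mul, one_mul, coeff_add, coeff_X_pow_mul', two_mul (T n (n + l))]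
  congr 1
  split_ifs with h
  · exact T_symm (show n + l - 2 * l + (n + l) = 2 * n by omega)
  · exact (T_eq_zero_of_lt (show 2 * n < n + l by omega)).symm

lemma two_mul_T_add_eq_sum_lucasCoeff_mul_forwardDiff (n l : ℕ) :
    2 * T n (n + l) = ∑ j ∈ Finset.range (l / 2 + 1),
      (-1) ^ j * (lucasCoeff l j : ℤ) * forwardDiff p (l - 2 * j) n := by
  have girard_waring := sum_lucasCoeff_mul_eq_pow_add_pow (1 : ℤ[X]) (X ^ 2)
    (show l < 2 * (l / 2 + 1) by omega)
  simp only [one_pow, one_mul, ← pow_mul] at girard_waring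
  rw [← coeff_one_add_X_pow_mul_trinomial_pow, ← girard_waring, Finset.sum_mul, finsetSum_coeff]
  refine Finset.sum_congr rfl fun j hj => ?_
  have hjl : 2 * j ≤ l := by rw [Finset.mem_range] at hj; omega
  have term_eq : (-1) ^ j * (lucasCoeff l j : ℤ[X]) * (X ^ (2 * j) * (1 + X ^ 2) ^ (l - 2 * j)) *
      (1 + X + X ^ 2) ^ n = C ((-1) ^ j * (lucasCoeff l j : ℤ)) *
        ((1 + X ^ 2) ^ (l - 2 * j) * (1 + X + X ^ 2) ^ n * X ^ (2 * j)) := by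
    simp only [map_mul, map_pow, map_neg, map_one, map_natCast]
    ring
  rw [term_eq, coeff_C_mul, show n + l = n + (l - 2 * j) + 2 * j by omega, coeff_mul_X_pow,
    forwardDiff_p]

theorem two_mul_diagonal_eq_finite_difference_formula (n lam : ℕ) (hlam : 1 ≤ lam) :
    (2 * T n (n + lam) : ℚ) =
      ∑ j ∈ Finset.range (lam / 2 + 1),
        (-1 : ℚ) ^ j * ((lam : ℚ) / ((lam : ℚ) - (j : ℚ))) * ((lam - j).choose j : ℚ) *
          (forwardDiff p (lam - 2 * j) n : ℚ) := by
  have integer_formula := congrArg (Int.cast : ℤ → ℚ)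
    (two_mul_T_add_eq_sum_lucasCoeff_mul_forwardDiff n lam)
  push_cast at integer_formula
  rw [integer_formula]
  refine Finset.sum_congr rfl fun j hj => ?_
  have hjl : 2 * j ≤ lam := by rw [Finset.mem_range] at hj; omega
  rw [lucasCoeff.cast_eq_div_mul_choose ℚ hlam hjl, ← mul_assoc]
end

section
/- For every natural number n, the central trinomial coefficient has the integral representation p_n = (1/π) · ∫_0^π (1 + 2·cos φ)^n dφ. -/
open Polynomial Real

/-! For a real polynomial `P`, the real part of `e^{-ikφ} P(e^{iφ})` is the cosine polynomial
`∑ⱼ Pⱼ cos ((j - k) φ)`, so its integral over `[0, π]` isolates the coefficient `Pₖ`. For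
`P = (1 + X + X²)^n` this real part is `(1 + 2 cos φ)^n cos ((n - k) φ)`, because
`1 + z + z² = z (1 + 2 cos φ)` at `z = e^{iφ}`. -/

lemma integral_cos_int_mul (m : ℤ) :
    ∫ φ in (0 : ℝ)..π, cos (m * φ) = if m = 0 then π else 0 := by
  split_ifs with hm
  · simp [hm]
  · rw [intervalIntegral.integral_comp_mul_left (fun x ↦ cos x) (Int.cast_ne_zero.mpr hm)]
    simp [sin_int_mul_pi]

lemma re_exp_mul_aeval_exp (P : ℝ[X]) (θ φ : ℝ) :
    (Complex.exp (θ * Complex.I) * aeval (Complex.exp (φ * Complex.I)) P).re =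
      ∑ j ∈ P.support, P.coeff j * cos (θ + j * φ) := by
  have hterm (j : ℕ) : Complex.exp (θ * Complex.I) * Complex.exp (φ * Complex.I) ^ j =
      Complex.exp ((θ + j * φ : ℝ) * Complex.I) := by
    rw [← Complex.exp_nat_mul, ← Complex.exp_add]
    congr 1
    push_cast
    ring
  rw [aeval_def, eval₂_eq_sum, Polynomial.sum, Finset.mul_sum, Complex.re_sum]
  refine Finset.sum_congr rfl fun j _ ↦ ?_
  rw [Complex.coe_algebraMap, mul_left_comm, hterm, Complex.re_ofReal_mul,
    Complex.exp_ofReal_mul_I_re]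

lemma integral_re_exp_mul_aeval_exp (P : ℝ[X]) (k : ℕ) :
    ∫ φ in (0 : ℝ)..π,
      (Complex.exp ((-k * φ : ℝ) * Complex.I) * aeval (Complex.exp (φ * Complex.I)) P).re =
      π * P.coeff k := by
  have hcos (j : ℕ) :
      ∫ φ in (0 : ℝ)..π, cos (-k * φ + j * φ) = if j = k then π else 0 := by
    convert integral_cos_int_mul (j - k) using 4
    · push_cast; ring
    · omega
  simp_rw [re_exp_mul_aeval_exp]
  rw [intervalIntegral.integral_finsetSum
    fun j _ ↦ Continuous.intervalIntegrable (by fun_prop) _ _]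
  simp_rw [intervalIntegral.integral_const_mul, hcos]
  simp [mul_comm π]

lemma one_add_exp_add_exp_sq (φ : ℂ) :
    1 + Complex.exp (φ * Complex.I) + Complex.exp (φ * Complex.I) ^ 2 =
      Complex.exp (φ * Complex.I) * (1 + 2 * Complex.cos φ) := by
  have hinv : Complex.exp (φ * Complex.I) * Complex.exp (-φ * Complex.I) = 1 := by
    simp [← Complex.exp_add]
  rw [Complex.two_cos]
  linear_combination -hinv

lemma coeff_one_add_X_add_X_sq_pow (R : Type*) [CommRing R] (n k : ℕ) :
    ((1 + X + X ^ 2 : R[X]) ^ n).coeff k = T n k := by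
  rw [T, ← eq_intCast (Int.castRingHom R), ← coeff_map]
  simp

lemma re_exp_mul_aeval_exp_one_add_X_add_X_sq_pow (n : ℕ) (θ φ : ℝ) :
    (Complex.exp (θ * Complex.I) *
      aeval (Complex.exp (φ * Complex.I)) ((1 + X + X ^ 2 : ℝ[X]) ^ n)).re =
      (1 + 2 * cos φ) ^ n * cos (θ + n * φ) := by
  have hpolar : Complex.exp (θ * Complex.I) *
      aeval (Complex.exp (φ * Complex.I)) ((1 + X + X ^ 2 : ℝ[X]) ^ n) =
      ((1 + 2 * cos φ) ^ n : ℝ) * Complex.exp ((θ + n * φ : ℝ) * Complex.I) := by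
    simp only [map_pow, map_add, map_one, aeval_X, one_add_exp_add_exp_sq, mul_pow]
    push_cast
    rw [add_mul, Complex.exp_add, mul_assoc (n : ℂ), Complex.exp_nat_mul]
    ring
  rw [hpolar, Complex.re_ofReal_mul, Complex.exp_ofReal_mul_I_re]

theorem central_trinomial_integral_representation_general (n k : ℕ) :
    (T n k : ℝ) =
      (1 / π) * ∫ φ in (0 : ℝ)..π, (1 + 2 * cos φ) ^ n * cos ((n - k) * φ) := by
  have hcoeff := integral_re_exp_mul_aeval_exp ((1 + X + X ^ 2) ^ n) k
  simp_rw [re_exp_mul_aeval_exp_one_add_X_add_X_sq_pow, coeff_one_add_X_add_X_sq_pow,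
    ← add_mul, neg_add_eq_sub] at hcoeff
  rw [hcoeff]
  field_simp

theorem central_trinomial_integral_representation (n : ℕ) :
    (p n : ℝ) = (1 / π) * ∫ φ in (0:ℝ)..π, (1 + 2 * Real.cos φ) ^ n := by
  simpa [p] using central_trinomial_integral_representation_general n n
end

section
/- For every natural number n and every real number φ, (1 + 2·cos φ)^n = p_n + 2 · ∑_{λ=1}^{n} T(n, n+λ) · cos(λφ); that is, the trinomial coefficients of (1+x+x^2)^n are precisely the cosine (Fourier) coefficients of the function (1+2·cos φ)^n. -/
/-!
Dividing `1 + z + z²` by `z = exp (iφ)` gives `1 + z + z⁻¹ = 1 + 2 cos φ`. As `1 + X + X²` is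
palindromic, so is `(1 + X + X²)^n`; hence `z⁻ⁿ (1 + z + z²)^n` is a Laurent polynomial in `z` that
is symmetric under `z ↦ z⁻¹`, and its terms pair up as `T n (n + l) (zˡ + z⁻ˡ)`, where
`zˡ + z⁻ˡ = 2 cos (lφ)`.
-/

open Polynomial Real

lemma sum_range_two_mul_add_one {M : Type*} [AddCommMonoid M] (f : ℕ → M) (n : ℕ) :
    ∑ k ∈ Finset.range (2 * n + 1), f k =
      f n + ∑ l ∈ Finset.Icc 1 n, (f (n - l) + f (n + l)) := by
  have lower_half : ∑ k ∈ Finset.range n, f k = ∑ l ∈ Finset.range n, f (n - (l + 1)) := by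
    rw [← Finset.sum_range_reflect]
    simp only [Nat.sub_sub, add_comm 1]
  have upper_half : ∑ k ∈ Finset.range (n + 1), f (n + k) =
      f n + ∑ l ∈ Finset.range n, f (n + (l + 1)) := by
    rw [Finset.sum_range_succ', add_zero, add_comm]
  rw [two_mul, add_assoc, Finset.sum_range_add, lower_half, upper_half, add_left_comm,
    ← Finset.sum_add_distrib, Finset.range_eq_Ico,
    Finset.sum_Ico_add' (fun l ↦ f (n - l) + f (n + l)), zero_add,
    Finset.Ico_add_one_right_eq_Icc]

section Palindromic

variable {R : Type*}

lemma reflect_pow [Semiring R] {f : R[X]} {N : ℕ} (hf : f.natDegree ≤ N) (n : ℕ) :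
    reflect (n * N) (f ^ n) = reflect N f ^ n := by
  induction n with
  | zero => simp
  | succ n ih =>
    rw [pow_succ, add_one_mul, reflect_mul _ _ (natDegree_pow_le_of_le n hf) hf, ih, pow_succ]

lemma coeff_sub_eq_coeff_add_of_reflect_eq [Semiring R] {f : R[X]} {n l : ℕ}
    (hf : reflect (2 * n) f = f) (hl : l ≤ n) : f.coeff (n - l) = f.coeff (n + l) := by
  have hrev : 2 * n - (n - l) = n + l := by omega
  rw [← hf, coeff_reflect, revAt_le (by omega), hrev, hf]

variable [CommSemiring R] {A : Type*} [CommSemiring A] [Algebra R A]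

lemma pow_mul_aeval_of_reflect_eq {f : R[X]} {n : ℕ} (hdeg : f.natDegree ≤ 2 * n)
    (hf : reflect (2 * n) f = f) {z w : A} (hzw : z * w = 1) :
    w ^ n * aeval z f =
      algebraMap R A (f.coeff n) +
        ∑ l ∈ Finset.Icc 1 n, algebraMap R A (f.coeff (n + l)) * (z ^ l + w ^ l) := by
  have pow_mul_pow_eq_one (k : ℕ) : z ^ k * w ^ k = 1 := by rw [← mul_pow, hzw, one_pow]
  rw [aeval_eq_sum_range' (Nat.lt_succ_of_le hdeg), Nat.succ_eq_add_one, Finset.mul_sum,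
    sum_range_two_mul_add_one]
  simp only [Algebra.smul_def]
  congr 1
  · rw [mul_left_comm, mul_comm (w ^ n), pow_mul_pow_eq_one, mul_one]
  · refine Finset.sum_congr rfl fun l hl ↦ ?_
    have hln : l ≤ n := (Finset.mem_Icc.mp hl).2
    have lower : w ^ n * z ^ (n - l) = w ^ l := by
      rw [← pow_mul_pow_sub w hln, mul_assoc, mul_comm (w ^ (n - l)), pow_mul_pow_eq_one, mul_one]
    have upper : w ^ n * z ^ (n + l) = z ^ l := by
      rw [pow_add, ← mul_assoc, mul_comm (w ^ n), pow_mul_pow_eq_one, one_mul]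
    rw [coeff_sub_eq_coeff_add_of_reflect_eq hf hln, mul_left_comm, lower, mul_left_comm, upper,
      ← mul_add, add_comm (w ^ l)]

end Palindromic

lemma natDegree_one_add_X_add_X_sq_le {R : Type*} [Semiring R] :
    (1 + X + X ^ 2 : R[X]).natDegree ≤ 2 := by
  compute_degree

lemma reflect_one_add_X_add_X_sq {R : Type*} [Semiring R] :
    reflect 2 (1 + X + X ^ 2 : R[X]) = 1 + X + X ^ 2 := by
  have reflect_X : reflect 2 (X : R[X]) = X := by
    simpa [revAt_le] using reflect_monomial (R := R) 2 1
  rw [reflect_add, reflect_add, reflect_one, reflect_X, reflect_monomial, revAt_le le_rfl,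
    Nat.sub_self, pow_zero, add_comm, add_comm (X ^ 2), ← add_assoc]

lemma one_add_add_pow_eq_sum_T {A : Type*} [CommRing A] {z w : A} (hzw : z * w = 1) (n : ℕ) :
    (1 + z + w) ^ n = p n + ∑ l ∈ Finset.Icc 1 n, (T n (n + l) : A) * (z ^ l + w ^ l) := by
  have hdeg : ((1 + X + X ^ 2 : ℤ[X]) ^ n).natDegree ≤ 2 * n :=
    mul_comm n 2 ▸ natDegree_pow_le_of_le n natDegree_one_add_X_add_X_sq_le
  have hreflect : reflect (2 * n) ((1 + X + X ^ 2 : ℤ[X]) ^ n) = (1 + X + X ^ 2) ^ n := by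
    rw [mul_comm, reflect_pow natDegree_one_add_X_add_X_sq_le, reflect_one_add_X_add_X_sq]
  have hbase : 1 + z + w = w * (1 + z + z ^ 2) := by
    linear_combination (-1 - z) * hzw
  calc (1 + z + w) ^ n = w ^ n * aeval z ((1 + X + X ^ 2 : ℤ[X]) ^ n) := by
        simp [hbase, mul_pow]
    _ = _ := by
        simpa only [algebraMap_int_eq, eq_intCast, p, T] using
          pow_mul_aeval_of_reflect_eq hdeg hreflect hzw

theorem trinomial_cosine_expansion_general (n : ℕ) (φ : ℂ) :
    (1 + 2 * Complex.cos φ) ^ n =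
      p n + 2 * ∑ l ∈ Finset.Icc 1 n, (T n (n + l) : ℂ) * Complex.cos (l * φ) := by
  set z := Complex.exp (φ * Complex.I) with hz
  set w := Complex.exp (-φ * Complex.I) with hw
  have hzw : z * w = 1 := by rw [hz, hw, ← Complex.exp_add]; simp
  have two_cos_mul (l : ℕ) : 2 * Complex.cos (l * φ) = z ^ l + w ^ l := by
    rw [Complex.two_cos, hz, hw, ← Complex.exp_nat_mul, ← Complex.exp_nat_mul, mul_assoc,
      ← mul_neg, mul_assoc]
  rw [Complex.two_cos, ← add_assoc, one_add_add_pow_eq_sum_T hzw, Finset.mul_sum]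
  simp only [mul_left_comm (2 : ℂ), two_cos_mul]

theorem trinomial_cosine_expansion (n : ℕ) (φ : ℝ) :
    (1 + 2 * Real.cos φ) ^ n =
      (p n : ℝ) + 2 * ∑ lam ∈ Finset.Icc 1 n, (T n (n + lam) : ℝ) * Real.cos (lam * φ) := by
  exact_mod_cast trinomial_cosine_expansion_general n φ
end

section
/- For every real number x with |x| < 1/3, the generating function of the central trinomial coefficients satisfies ∑_{n=0}^{∞} p_n · x^n = 1 / √(1 − 2x − 3x^2), the series being absolutely convergent. -/
open Polynomial

/-!
Expanding `((1 + X²) + X)^n` binomially exhibits `p` as the binomial transform of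
`c m = [X^m] (1 + X²)^m`, which is `0` for odd `m` and `C(2k, k)` for `m = 2k`.  Since
`∑ n, C(n, m) x^n = x^m / (1 - x)^(m+1)`, the binomial transform substitutes `y = x / (1 - x)` into
a generating function and divides it by `1 - x`.  The binomial series with exponent `-1/2` gives
`∑ m, c m y^m = 1 / √(1 - 4y²)`, and `(1 - x)² (1 - 4y²) = 1 - 2x - 3x²`.  The bound `|x| < 1/3` is
exactly what makes `|x| / (1 - |x|) < 1/2`, so that the interchange of summations is absolutely
convergent.
-/

open Finset

section BinomialTransform

/-- The binomial transform `n ↦ ∑ m ≤ n, C(n, m) a m` of a sequence `a` (without alternating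
signs); it turns the sequence `[X^m] f^m` into `[X^n] (f + X)^n`. -/
def binomialTransform {R : Type*} [Semiring R] (a : ℕ → R) (n : ℕ) : R :=
  ∑ m ∈ range (n + 1), (n.choose m : R) * a m

lemma coeff_add_X_pow_self {R : Type*} [Semiring R] (f : R[X]) (n : ℕ) :
    ((f + X) ^ n).coeff n = binomialTransform (fun m ↦ (f ^ m).coeff m) n := by
  rw [(commute_X f).symm.add_pow, finsetSum_coeff, binomialTransform]
  refine sum_congr rfl fun m hm ↦ ?_
  have hmn : m ≤ n := mem_range_succ_iff.mp hm
  rw [← Nat.cast_comm, coeff_natCast_mul, coeff_mul_X_pow', if_pos (Nat.sub_le n m),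
    Nat.sub_sub_self hmn]

lemma hasSum_mul_choose_mul_pow_lower {R : Type*} [CommSemiring R] [TopologicalSpace R]
    (a : ℕ → R) (x : R) (n : ℕ) :
    HasSum (fun m ↦ a m * ((n.choose m : R) * x ^ n)) (binomialTransform a n * x ^ n) := by
  have h : binomialTransform a n * x ^ n =
      ∑ m ∈ range (n + 1), a m * ((n.choose m : R) * x ^ n) := by
    rw [binomialTransform, sum_mul]
    exact sum_congr rfl fun m _ ↦ by ring
  rw [h]
  refine hasSum_sum_of_ne_finset_zero fun m hm ↦ ?_
  simp [Nat.choose_eq_zero_of_lt (by simpa using hm : n < m)]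

variable {𝕜 : Type*} [NormedField 𝕜]

lemma hasSum_choose_mul_pow (m : ℕ) {x : 𝕜} (hx : ‖x‖ < 1) :
    HasSum (fun n ↦ (n.choose m : 𝕜) * x ^ n) (x ^ m / (1 - x) ^ (m + 1)) := by
  have initial_eq_zero : ∑ n ∈ range m, (n.choose m : 𝕜) * x ^ n = 0 :=
    sum_eq_zero fun n hn ↦ by simp [Nat.choose_eq_zero_of_lt (mem_range.mp hn)]
  rw [← hasSum_nat_add_iff' m, initial_eq_zero, sub_zero, ← mul_one_div]
  convert! (hasSum_choose_mul_geometric_of_norm_lt_one m hx).mul_left (x ^ m) using 2 with n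
  ring

lemma hasSum_mul_choose_mul_pow_upper (c : 𝕜) (m : ℕ) {x : 𝕜} (hx : ‖x‖ < 1) :
    HasSum (fun n ↦ c * ((n.choose m : 𝕜) * x ^ n)) (c * (x / (1 - x)) ^ m / (1 - x)) := by
  convert! (hasSum_choose_mul_pow m hx).mul_left c using 1
  rw [div_pow, mul_div_assoc, div_div, pow_succ]

lemma summable_mul_choose_mul_pow [CompleteSpace 𝕜] {a : ℕ → 𝕜} {x : 𝕜} (hx : ‖x‖ < 1)
    (ha : Summable fun m ↦ ‖a m‖ * (‖x‖ / (1 - ‖x‖)) ^ m) :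
    Summable fun q : ℕ × ℕ ↦ a q.1 * ((q.2.choose q.1 : 𝕜) * x ^ q.2) := by
  have hrow (m : ℕ) := hasSum_mul_choose_mul_pow_upper ‖a m‖ m (x := ‖x‖) (by simpa using hx)
  have hreal : Summable fun q : ℕ × ℕ ↦ ‖a q.1‖ * ((q.2.choose q.1 : ℝ) * ‖x‖ ^ q.2) := by
    rw [summable_prod_of_nonneg fun q ↦ by positivity]
    refine ⟨fun m ↦ (hrow m).summable, ?_⟩
    simpa only [(hrow _).tsum_eq] using ha.div_const (1 - ‖x‖)
  refine hreal.of_norm_bounded fun q ↦ ?_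
  rw [norm_mul, norm_mul, norm_pow]
  gcongr
  simpa using Nat.norm_cast_le (α := 𝕜) (q.2.choose q.1)

lemma hasSum_binomialTransform_mul_pow [CompleteSpace 𝕜] {a : ℕ → 𝕜} {x s : 𝕜} (hx : ‖x‖ < 1)
    (ha : Summable fun m ↦ ‖a m‖ * (‖x‖ / (1 - ‖x‖)) ^ m)
    (hs : HasSum (fun m ↦ a m * (x / (1 - x)) ^ m) s) :
    HasSum (fun n ↦ binomialTransform a n * x ^ n) (s / (1 - x)) := by
  have hsum := (summable_mul_choose_mul_pow hx ha).hasSum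
  have hrows := hsum.prod_fiberwise fun m ↦ hasSum_mul_choose_mul_pow_upper (a m) m hx
  have hcols := ((Equiv.prodComm ℕ ℕ).hasSum_iff.mpr hsum).prod_fiberwise
    fun n ↦ hasSum_mul_choose_mul_pow_lower a x n
  rwa [hrows.unique (hs.div_const (1 - x))] at hcols

end BinomialTransform

section CentralBinom

lemma ascPochhammer_eval_one_half {K : Type*} [Field K] [CharZero K] (n : ℕ) :
    (ascPochhammer K n).eval (1 / 2) * 4 ^ n = n.factorial * n.centralBinom := by
  induction n with
  | zero => simp
  | succ n ih =>
    have h : ((n : K) + 1) * (n + 1).centralBinom = 2 * (2 * n + 1) * n.centralBinom := by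
      exact_mod_cast Nat.succ_mul_centralBinom_succ n
    rw [ascPochhammer_succ_eval, Nat.factorial_succ]
    push_cast
    linear_combination (4 * n + 2 : K) * ih - (n.factorial : K) * h

lemma multichoose_one_half {K : Type*} [Field K] [CharZero K] [BinomialRing K] (n : ℕ) :
    Ring.multichoose (1 / 2 : K) n = n.centralBinom / 4 ^ n := by
  have h := Ring.factorial_nsmul_multichoose_eq_ascPochhammer (1 / 2 : K) n
  rw [ascPochhammer_smeval_eq_eval, nsmul_eq_mul] at h
  have hn : (n.factorial : K) ≠ 0 := Nat.cast_ne_zero.mpr n.factorial_ne_zero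
  rw [eq_div_iff (pow_ne_zero n (OfNat.ofNat_ne_zero 4))]
  apply mul_left_cancel₀ hn
  rw [← mul_assoc, h, ascPochhammer_eval_one_half]

lemma hasSum_centralBinom_mul_pow {x : ℝ} (hx : |x| < 1 / 4) :
    HasSum (fun k ↦ (k.centralBinom : ℝ) * x ^ k) (1 / √(1 - 4 * x)) := by
  have hball : 4 * x ∈ Metric.eball (0 : ℝ) 1 := by
    rw [← ENNReal.ofReal_one, Metric.eball_ofReal, mem_ball_zero_iff, norm_mul, Real.norm_ofNat,
      Real.norm_eq_abs]
    linarith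
  have h := (Real.one_div_one_sub_rpow_hasFPowerSeriesOnBall_zero (1 / 2)).hasSum hball
  simp only [FormalMultilinearSeries.ofScalars_apply_eq, ← Ring.multichoose_eq,
    multichoose_one_half, ← Real.sqrt_eq_rpow, zero_add, smul_eq_mul] at h
  convert! h using 2 with k
  rw [mul_pow]
  field_simp

lemma one_add_X_sq_pow_eq_expand {R : Type*} [CommSemiring R] (m : ℕ) :
    (1 + X ^ 2 : R[X]) ^ m = expand R 2 ((1 + X) ^ m) := by
  simp

lemma coeff_one_add_X_sq_pow_two_mul {R : Type*} [CommSemiring R] (k : ℕ) :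
    ((1 + X ^ 2 : R[X]) ^ (2 * k)).coeff (2 * k) = k.centralBinom := by
  rw [one_add_X_sq_pow_eq_expand, coeff_expand_mul' two_pos, coeff_one_add_X_pow,
    Nat.centralBinom_eq_two_mul_choose]

lemma coeff_one_add_X_sq_pow_of_odd {R : Type*} [CommSemiring R] (m : ℕ) {j : ℕ} (hj : Odd j) :
    ((1 + X ^ 2 : R[X]) ^ m).coeff j = 0 := by
  rw [one_add_X_sq_pow_eq_expand, coeff_expand two_pos, if_neg hj.not_two_dvd_nat]

lemma hasSum_coeff_one_add_X_sq_pow_mul_pow {y : ℝ} (hy : |y| < 1 / 2) :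
    HasSum (fun m ↦ ((1 + X ^ 2 : ℝ[X]) ^ m).coeff m * y ^ m) (1 / √(1 - 4 * y ^ 2)) := by
  have hy_sq : |y ^ 2| < 1 / 4 := by
    rw [abs_pow]
    nlinarith [abs_nonneg y]
  rw [← add_zero (1 / _)]
  refine HasSum.even_add_odd ?_ ?_
  · simpa only [coeff_one_add_X_sq_pow_two_mul, pow_mul y] using hasSum_centralBinom_mul_pow hy_sq
  · simpa only [coeff_one_add_X_sq_pow_of_odd _ (odd_two_mul_add_one _), zero_mul]
      using hasSum_zero

end CentralBinom

lemma intCast_p {R : Type*} [Ring R] (n : ℕ) :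
    (p n : R) = binomialTransform (fun m ↦ ((1 + X ^ 2 : R[X]) ^ m).coeff m) n := by
  have hmap : (1 + X ^ 2 + X : R[X]) ^ n =
      ((1 + X + X ^ 2 : ℤ[X]) ^ n).map (Int.castRingHom R) := by
    simp [add_right_comm]
  rw [← coeff_add_X_pow_self, hmap, coeff_map, p, T, eq_intCast]

lemma abs_div_one_sub_lt_one_half {x : ℝ} (hx : |x| < 1 / 3) : |x / (1 - x)| < 1 / 2 := by
  obtain ⟨hl, hr⟩ := abs_lt.mp hx
  have hpos : 0 < 1 - x := by linarith
  rw [abs_div, abs_of_pos hpos, div_lt_iff₀ hpos]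
  cases abs_cases x <;> linarith

lemma sqrt_one_sub_two_mul_sub_three_mul_sq {x : ℝ} (hx : x < 1) :
    √(1 - 2 * x - 3 * x ^ 2) = √(1 - 4 * (x / (1 - x)) ^ 2) * (1 - x) := by
  have hpos : 0 < 1 - x := sub_pos.mpr hx
  have hfactor : 1 - 2 * x - 3 * x ^ 2 = (1 - 4 * (x / (1 - x)) ^ 2) * (1 - x) ^ 2 := by
    field_simp
    ring
  rw [hfactor, Real.sqrt_mul' _ (sq_nonneg _), Real.sqrt_sq hpos.le]

theorem central_trinomial_generating_function (x : ℝ) (hx : |x| < 1 / 3) :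
    Summable (fun n : ℕ => |(p n : ℝ) * x ^ n|) ∧
      ∑' n : ℕ, (p n : ℝ) * x ^ n = 1 / Real.sqrt (1 - 2 * x - 3 * x ^ 2) := by
  have hx_lt : |x| < 1 := by linarith
  have habs : Summable fun m ↦ ‖((1 + X ^ 2 : ℝ[X]) ^ m).coeff m‖ * (‖x‖ / (1 - ‖x‖)) ^ m := by
    have hy : |(|x| / (1 - |x|))| < 1 / 2 := abs_div_one_sub_lt_one_half (by rwa [abs_abs])
    have hy_nonneg : 0 ≤ |x| / (1 - |x|) := div_nonneg (abs_nonneg x) (by linarith)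
    simpa [abs_mul, abs_of_nonneg hy_nonneg] using
      (hasSum_coeff_one_add_X_sq_pow_mul_pow hy).summable.abs
  have hsum : HasSum (fun n ↦ (p n : ℝ) * x ^ n) (1 / √(1 - 2 * x - 3 * x ^ 2)) := by
    simp only [intCast_p]
    rw [sqrt_one_sub_two_mul_sub_three_mul_sq (abs_lt.mp hx_lt).2, ← div_div]
    exact hasSum_binomialTransform_mul_pow hx_lt habs
      (hasSum_coeff_one_add_X_sq_pow_mul_pow (abs_div_one_sub_lt_one_half hx))
  exact ⟨hsum.summable.abs, hsum.tsum_eq⟩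
end

section
/- Fix a natural number λ and a real number x with 0 < x < 1/3, and set ν := (1 − x − √(1 − 2x − 3x^2))/2. Then the diagonal generating function of the trinomial coefficients satisfies ∑_{n=0}^{∞} T(n, n+λ) · x^(n+λ) = ν^λ / √(1 − 2x − 3x^2), the series being absolutely convergent. -/
/-!
Let `c n k` be the coefficient of `t^k` in `(t⁻¹ + 1 + t)^n`, so that `T n (n + k) = c n k`. The
diagonal sums `g k = ∑ₙ c n k x^n` satisfy `g k = δ_{k,0} + x (g (k-1) + g k + g (k+1))`.
Conversely, substituting this equation into itself `N` times shows that the `N`-th partial sums of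
the series approximate any bounded solution `g` with error at most `(3‖x‖)^N sup ‖g‖`, hence
converge to it if `‖x‖ < 1/3`.

If `r = x (1 + r + r²)` and `‖r‖ ≤ 1`, a bounded solution is `g k = r^|k| / (1 - x - 2xr)`. For
`s² = 1 - 2x - 3x²` and `μ = (1 - x + s)/2` one can take `r = x/μ`, and then `x r = (1 - x - s)/2`
and `1 - x - 2xr = s`.
-/

open Polynomial

open Filter Finset Topology
open scoped LaurentPolynomial

lemma coeff_mul_laurentT {R : Type*} [Semiring R] (f : R[T;T⁻¹]) (m k : ℤ) :
    (f * LaurentPolynomial.T m).coeff k = f.coeff (k - m) := by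
  rw [LaurentPolynomial.T, AddMonoidAlgebra.coeff_mul_single_apply, mul_one, sub_eq_add_neg]

lemma coeff_toLaurent_natCast {R : Type*} [Semiring R] (p : R[X]) (k : ℕ) :
    (toLaurent p).coeff k = p.coeff k :=
  Finsupp.mapDomain_apply Nat.cast_injective _ _

/-- The coefficient of `t^k` in the Laurent polynomial `(t⁻¹ + 1 + t)^n`: the trinomial coefficient
indexed by its offset `k : ℤ` from the central one. -/
noncomputable def centeredTrinomialCoeff (n : ℕ) (k : ℤ) : ℤ :=
  ((LaurentPolynomial.T (-1) + 1 + LaurentPolynomial.T 1 : ℤ[T;T⁻¹]) ^ n).coeff k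

lemma T_eq_centeredTrinomialCoeff (n k : ℕ) : T n k = centeredTrinomialCoeff n (k - n) := by
  have hfactor : (toLaurent (1 + X + X ^ 2) : ℤ[T;T⁻¹]) =
      (LaurentPolynomial.T (-1) + 1 + LaurentPolynomial.T 1) * LaurentPolynomial.T 1 := by
    simp only [map_add, map_one, toLaurent_X, toLaurent_X_pow, add_mul, one_mul,
      ← LaurentPolynomial.T_add]
    rfl
  rw [T, ← coeff_toLaurent_natCast, map_pow, hfactor, mul_pow, LaurentPolynomial.T_pow, mul_one,
    coeff_mul_laurentT, centeredTrinomialCoeff]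

lemma centeredTrinomialCoeff_zero (k : ℤ) :
    centeredTrinomialCoeff 0 k = if k = 0 then 1 else 0 := by
  rw [centeredTrinomialCoeff, pow_zero, ← LaurentPolynomial.T_zero, LaurentPolynomial.T_apply]
  simp only [eq_comm]

lemma centeredTrinomialCoeff_succ (n : ℕ) (k : ℤ) :
    centeredTrinomialCoeff (n + 1) k = centeredTrinomialCoeff n (k - 1) +
      centeredTrinomialCoeff n k + centeredTrinomialCoeff n (k + 1) := by
  simp only [centeredTrinomialCoeff, pow_succ, mul_add, mul_one, AddMonoidAlgebra.coeff_add,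
    Finsupp.add_apply, coeff_mul_laurentT, sub_neg_eq_add]
  ring

/-- The `N`-th partial sum `∑_{n < N} c n k x^n` of the `k`-th diagonal generating function, where
`c` is `centeredTrinomialCoeff`. -/
noncomputable def diagonalPartialSum {R : Type*} [CommRing R] (x : R) (N : ℕ) (k : ℤ) : R :=
  ∑ n ∈ range N, (centeredTrinomialCoeff n k : R) * x ^ n

lemma diagonalPartialSum_succ {R : Type*} [CommRing R] (x : R) (N : ℕ) (k : ℤ) :
    diagonalPartialSum x (N + 1) k = (if k = 0 then 1 else 0) +
      x * (diagonalPartialSum x N (k - 1) + diagonalPartialSum x N k +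
        diagonalPartialSum x N (k + 1)) := by
  simp only [diagonalPartialSum]
  rw [sum_range_succ', add_comm, ← sum_add_distrib, ← sum_add_distrib, mul_sum]
  congr 1
  · simp [centeredTrinomialCoeff_zero]
  · refine sum_congr rfl fun n _ => ?_
    rw [centeredTrinomialCoeff_succ]
    push_cast
    ring

section SeminormedRing

variable {R : Type*} [SeminormedCommRing R] {x : R} {g : ℤ → R} {B : ℝ}

lemma norm_centeredTrinomialCoeff_le [NormOneClass R] (n : ℕ) (k : ℤ) :
    ‖(centeredTrinomialCoeff n k : R)‖ ≤ 3 ^ n := by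
  induction n generalizing k with
  | zero => rw [centeredTrinomialCoeff_zero]; split_ifs <;> simp
  | succ n ih =>
    rw [centeredTrinomialCoeff_succ, Int.cast_add, Int.cast_add]
    calc _ ≤ (3 : ℝ) ^ n + 3 ^ n + 3 ^ n :=
          norm_add₃_le.trans (add_le_add_three (ih _) (ih _) (ih _))
      _ = 3 ^ (n + 1) := by ring

lemma summable_norm_centeredTrinomialCoeff_mul_pow [NormOneClass R] (hx : ‖x‖ < 1 / 3) (k : ℤ) :
    Summable fun n : ℕ => ‖(centeredTrinomialCoeff n k : R) * x ^ n‖ := by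
  refine .of_nonneg_of_le (fun n => norm_nonneg _) (fun n => ?_)
    (summable_geometric_of_lt_one (r := 3 * ‖x‖) (by positivity) (by linarith))
  rw [mul_pow]
  exact norm_mul_le_of_le (norm_centeredTrinomialCoeff_le n k) (norm_pow_le x n)

lemma norm_sub_diagonalPartialSum_le
    (hg : ∀ k, g k = (if k = 0 then 1 else 0) + x * (g (k - 1) + g k + g (k + 1)))
    (hB : ∀ k, ‖g k‖ ≤ B) (N : ℕ) (k : ℤ) :
    ‖g k - diagonalPartialSum x N k‖ ≤ (3 * ‖x‖) ^ N * B := by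
  induction N generalizing k with
  | zero => simpa [diagonalPartialSum] using hB k
  | succ N ih =>
    have herror : g k - diagonalPartialSum x (N + 1) k =
        x * ((g (k - 1) - diagonalPartialSum x N (k - 1)) + (g k - diagonalPartialSum x N k) +
          (g (k + 1) - diagonalPartialSum x N (k + 1))) := by
      linear_combination hg k - diagonalPartialSum_succ x N k
    rw [herror]
    calc _ ≤ ‖x‖ * ((3 * ‖x‖) ^ N * B + (3 * ‖x‖) ^ N * B + (3 * ‖x‖) ^ N * B) :=
          norm_mul_le_of_le le_rfl
            (norm_add₃_le.trans (add_le_add_three (ih _) (ih _) (ih _)))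
      _ = (3 * ‖x‖) ^ (N + 1) * B := by ring

lemma hasSum_centeredTrinomialCoeff_mul_pow [NormOneClass R] [CompleteSpace R] (hx : ‖x‖ < 1 / 3)
    (hg : ∀ k, g k = (if k = 0 then 1 else 0) + x * (g (k - 1) + g k + g (k + 1)))
    (hB : ∀ k, ‖g k‖ ≤ B) (k : ℤ) :
    HasSum (fun n : ℕ => (centeredTrinomialCoeff n k : R) * x ^ n) (g k) := by
  rw [hasSum_iff_tendsto_nat_of_summable_norm (summable_norm_centeredTrinomialCoeff_mul_pow hx k),
    tendsto_iff_norm_sub_tendsto_zero]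
  have hgeom : Tendsto (fun N : ℕ => (3 * ‖x‖) ^ N * B) atTop (𝓝 0) := by
    simpa only [zero_mul] using (tendsto_pow_atTop_nhds_zero_of_lt_one (r := 3 * ‖x‖)
      (by positivity) (by linarith)).mul_const B
  refine squeeze_zero (fun N => norm_nonneg _) (fun N => ?_) hgeom
  rw [norm_sub_rev]
  exact norm_sub_diagonalPartialSum_le hg hB N k

end SeminormedRing

lemma pow_natAbs_div_eq {K : Type*} [Field K] {x r : K} (hr : r = x * (1 + r + r ^ 2))
    (hd : 1 - x - 2 * x * r ≠ 0) (k : ℤ) :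
    r ^ k.natAbs / (1 - x - 2 * x * r) = (if k = 0 then 1 else 0) +
      x * (r ^ (k - 1).natAbs / (1 - x - 2 * x * r) + r ^ k.natAbs / (1 - x - 2 * x * r) +
        r ^ (k + 1).natAbs / (1 - x - 2 * x * r)) := by
  rcases lt_trichotomy k 0 with hk | rfl | hk
  · rw [if_neg hk.ne, show k.natAbs = (k + 1).natAbs + 1 by omega,
      show (k - 1).natAbs = (k + 1).natAbs + 2 by omega]
    linear_combination r ^ (k + 1).natAbs / (1 - x - 2 * x * r) * hr
  · simp only [Int.natAbs_zero, pow_zero, if_true, zero_sub, zero_add, Int.natAbs_neg,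
      Int.natAbs_one, pow_one]
    linear_combination mul_inv_cancel₀ hd
  · rw [if_neg hk.ne', show k.natAbs = (k - 1).natAbs + 1 by omega,
      show (k + 1).natAbs = (k - 1).natAbs + 2 by omega]
    linear_combination r ^ (k - 1).natAbs / (1 - x - 2 * x * r) * hr

lemma one_sub_sub_two_mul_ne_zero {K : Type*} [NormedField K] {x r : K} (hx : ‖x‖ < 1 / 3)
    (hr : ‖r‖ ≤ 1) : 1 - x - 2 * x * r ≠ 0 := by
  intro h
  have hxr : ‖x * r‖ ≤ ‖x‖ := by
    simpa only [norm_mul, mul_one] using mul_le_mul_of_nonneg_left hr (norm_nonneg x)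
  have hone : (1 : ℝ) ≤ 3 * ‖x‖ :=
    calc (1 : ℝ) = ‖x + x * r + x * r‖ := by
          rw [← norm_one (α := K)]; congr 1; linear_combination h
      _ ≤ ‖x‖ + ‖x‖ + ‖x‖ := norm_add₃_le.trans (by gcongr)
      _ = 3 * ‖x‖ := by ring
  linarith

lemma hasSum_centeredTrinomialCoeff_mul_pow_of_eq {K : Type*} [NormedField K] [CompleteSpace K]
    {x r : K} (hx : ‖x‖ < 1 / 3) (hr : r = x * (1 + r + r ^ 2)) (hr_norm : ‖r‖ ≤ 1) (k : ℤ) :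
    HasSum (fun n : ℕ => (centeredTrinomialCoeff n k : K) * x ^ n)
      (r ^ k.natAbs / (1 - x - 2 * x * r)) := by
  refine hasSum_centeredTrinomialCoeff_mul_pow (B := 1 / ‖1 - x - 2 * x * r‖) hx
    (pow_natAbs_div_eq hr (one_sub_sub_two_mul_ne_zero hx hr_norm)) (fun k => ?_) k
  rw [norm_div, norm_pow]
  gcongr
  exact pow_le_one₀ (norm_nonneg r) hr_norm

section RCLike

variable {𝕜 : Type*} [RCLike 𝕜]

lemma norm_lt_norm_one_sub_add_div_two {x s : 𝕜} (hx : ‖x‖ < 1 / 3) (hs : 0 ≤ RCLike.re s) :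
    ‖x‖ < ‖(1 - x + s) / 2‖ := by
  have hre : 1 - RCLike.re x + RCLike.re s ≤ ‖1 - x + s‖ := by
    simpa using RCLike.re_le_norm (1 - x + s)
  rw [norm_div, RCLike.norm_two]
  linarith [RCLike.re_le_norm x]

lemma exists_norm_le_one_and_eq_mul {x s : 𝕜} (hx : ‖x‖ < 1 / 3)
    (hs : s ^ 2 = 1 - 2 * x - 3 * x ^ 2) (hs_re : 0 ≤ RCLike.re s) :
    ∃ r : 𝕜, ‖r‖ ≤ 1 ∧ r = x * (1 + r + r ^ 2) ∧ x * r = (1 - x - s) / 2 := by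
  obtain ⟨μ, hμ⟩ : ∃ μ, μ = (1 - x + s) / 2 := ⟨_, rfl⟩
  have hxμ : ‖x‖ < ‖μ‖ := hμ ▸ norm_lt_norm_one_sub_add_div_two hx hs_re
  have hμ_ne : μ ≠ 0 := norm_pos_iff.mp ((norm_nonneg x).trans_lt hxμ)
  have hquad : μ ^ 2 - (1 - x) * μ + x ^ 2 = 0 := by rw [hμ]; linear_combination hs / 4
  refine ⟨x / μ, ?_, ?_, ?_⟩
  · rw [norm_div]
    exact div_le_one_of_le₀ hxμ.le (norm_nonneg μ)
  · field_simp
    linear_combination -x * hquad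
  · rw [show (1 - x - s) / 2 = 1 - x - μ by rw [hμ]; ring]
    field_simp
    linear_combination hquad

/-- The condition `0 ≤ re s` selects one of the two square roots of `1 - 2x - 3x²`. -/
theorem trinomial_diagonal_generating_function_general (lam : ℕ) {x s : 𝕜} (hx : ‖x‖ < 1 / 3)
    (hs : s ^ 2 = 1 - 2 * x - 3 * x ^ 2) (hs_re : 0 ≤ RCLike.re s) :
    Summable (fun n : ℕ => ‖(T n (n + lam) : 𝕜) * x ^ (n + lam)‖) ∧
      ∑' n : ℕ, (T n (n + lam) : 𝕜) * x ^ (n + lam) = ((1 - x - s) / 2) ^ lam / s := by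
  have hterm (n : ℕ) : (T n (n + lam) : 𝕜) * x ^ (n + lam) =
      x ^ lam * ((centeredTrinomialCoeff n lam : 𝕜) * x ^ n) := by
    rw [T_eq_centeredTrinomialCoeff, Nat.cast_add, add_sub_cancel_left]
    ring
  obtain ⟨r, hr_norm, hr, hν⟩ := exists_norm_le_one_and_eq_mul hx hs hs_re
  have hden : 1 - x - 2 * x * r = s := by linear_combination -2 * hν
  have hsum := hasSum_centeredTrinomialCoeff_mul_pow_of_eq hx hr hr_norm lam
  rw [hden, Int.natAbs_natCast] at hsum
  simp only [hterm]
  constructor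
  · simpa only [norm_mul] using
      (summable_norm_centeredTrinomialCoeff_mul_pow hx (lam : ℤ)).mul_left ‖x ^ lam‖
  · rw [(hsum.mul_left _).tsum_eq, mul_div, ← mul_pow, hν]

end RCLike

theorem trinomial_diagonal_generating_function (lam : ℕ) (x : ℝ)
    (hx₁ : 0 < x) (hx₂ : x < 1 / 3)
    (ν : ℝ) (hν : ν = (1 - x - Real.sqrt (1 - 2 * x - 3 * x ^ 2)) / 2) :
    Summable (fun n : ℕ => |(T n (n + lam) : ℝ) * x ^ (n + lam)|) ∧
      ∑' n : ℕ, (T n (n + lam) : ℝ) * x ^ (n + lam) =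
        ν ^ lam / Real.sqrt (1 - 2 * x - 3 * x ^ 2) := by
  simpa only [hν, Real.norm_eq_abs] using trinomial_diagonal_generating_function_general lam
    (by rwa [Real.norm_of_nonneg hx₁.le]) (Real.sq_sqrt (by nlinarith)) (Real.sqrt_nonneg _)
end

section
/- Fix a natural number λ and a real number x with 0 < x < 1/3, and set ν := (1 − x − √(1 − 2x − 3x^2))/2. Then ∫_0^π cos(λφ) / (1 − x − 2x·cos φ) dφ = (π / √(1 − 2x − 3x^2)) · (ν/x)^λ. -/
/-!
On the unit circle the Poisson kernel at a real point `r` is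
`(1 - r²) / (1 - 2 r cos φ + r²)`, so the Poisson integral formula for the harmonic function
`Re zⁿ` gives its cosine coefficients `π rⁿ`. For `|b| < a` the smaller root `r` of
`b r² - 2 a r + b = 0` turns this kernel into `√(a² - b²) / (a - b cos φ)`; the theorem is the case
`a = 1 - x`, `b = 2 x`, where `r = ν / x`.
-/

open Real

lemma integral_eq_two_smul_integral_of_symm {E : Type*} [NormedAddCommGroup E] [NormedSpace ℝ E]
    {f : ℝ → E} {a c : ℝ} (hint : IntervalIntegrable f MeasureTheory.volume a c)
    (hsymm : ∀ t, f (2 * c - t) = f t) :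
    ∫ t in a..(2 * c - a), f t = (2 : ℝ) • ∫ t in a..c, f t := by
  have hmid : 2 * c - c = c := by ring
  have hint' : IntervalIntegrable f MeasureTheory.volume c (2 * c - a) := by
    simpa only [hsymm, hmid] using (hint.comp_sub_left (2 * c)).symm
  have hreflect : ∫ t in c..(2 * c - a), f t = ∫ t in a..c, f t := by
    simpa only [hsymm, hmid] using
      (intervalIntegral.integral_comp_sub_left f (2 * c) (a := a) (b := c)).symm
  rw [← intervalIntegral.integral_add_adjacent_intervals hint hint', hreflect, two_smul]

lemma one_sub_two_mul_mul_cos_add_sq_pos {r : ℝ} (hr : |r| < 1) (φ : ℝ) :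
    0 < 1 - 2 * r * cos φ + r ^ 2 := by
  have hcos : (r * cos φ) ^ 2 ≤ r ^ 2 := by
    rw [mul_pow]
    exact mul_le_of_le_one_right (sq_nonneg r) (cos_sq_le_one φ)
  have hr2 : r ^ 2 < 1 := (sq_lt_one_iff_abs_lt_one r).mpr hr
  nlinarith [sq_nonneg (1 - r * cos φ)]

lemma re_circleMap_zero_one_pow (n : ℕ) (φ : ℝ) : (circleMap 0 1 φ ^ n).re = cos (n * φ) := by
  rw [circleMap_zero, Complex.ofReal_one, one_mul, ← Complex.exp_nat_mul, ← mul_assoc]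
  exact_mod_cast Complex.exp_ofReal_mul_I_re (n * φ)

lemma poissonKernel_zero_ofReal_circleMap (r φ : ℝ) :
    poissonKernel 0 r (circleMap 0 1 φ) = (1 - r ^ 2) / (1 - 2 * r * cos φ + r ^ 2) := by
  have hdist : ‖circleMap 0 1 φ - r‖ ^ 2 = 1 - 2 * r * cos φ + r ^ 2 := by
    rw [← Complex.normSq_eq_norm_sq, Complex.normSq_apply]
    simp only [circleMap_zero, Complex.ofReal_one, one_mul, Complex.sub_re, Complex.sub_im,
      Complex.exp_ofReal_mul_I_re, Complex.exp_ofReal_mul_I_im, Complex.ofReal_re,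
      Complex.ofReal_im]
    linear_combination sin_sq_add_cos_sq φ
  simp [poissonKernel_def, hdist]

lemma integral_poissonKernel_mul_cos_nat_mul {r : ℝ} (hr : |r| < 1) (n : ℕ) :
    ∫ φ in (0 : ℝ)..π, (1 - r ^ 2) / (1 - 2 * r * cos φ + r ^ 2) * cos (n * φ) = π * r ^ n := by
  set f : ℝ → ℝ := fun φ ↦ (1 - r ^ 2) / (1 - 2 * r * cos φ + r ^ 2) * cos (n * φ) with hf
  have hharm : InnerProductSpace.HarmonicOnNhd (fun z : ℂ ↦ (z ^ n).re) (Metric.closedBall 0 1) :=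
    fun z _ ↦ AnalyticAt.harmonicAt_re (by fun_prop)
  have hmean : (2 * π)⁻¹ * ∫ φ in (0 : ℝ)..2 * π, f φ = r ^ n := by
    have hpoisson := hharm.circleAverage_poissonKernel_smul (w := (r : ℂ)) (by simpa using hr)
    simpa only [circleAverage_def, smul_eq_mul, Pi.mul_apply, poissonKernel_zero_ofReal_circleMap,
      re_circleMap_zero_one_pow, ← Complex.ofReal_pow, Complex.ofReal_re]
      using hpoisson
  have hcont : Continuous f :=
    (continuous_const.div (by fun_prop)
      fun φ ↦ (one_sub_two_mul_mul_cos_add_sq_pos hr φ).ne').mul (by fun_prop)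
  have hsymm : ∀ φ, f (2 * π - φ) = f φ := fun φ ↦ by
    simp only [hf, cos_two_pi_sub, mul_sub, cos_nat_mul_two_pi_sub]
  have hhalf : ∫ φ in (0 : ℝ)..2 * π, f φ = 2 * ∫ φ in (0 : ℝ)..π, f φ := by
    simpa using integral_eq_two_smul_integral_of_symm (hcont.intervalIntegrable 0 π) hsymm
  rw [hhalf] at hmean
  field_simp at hmean
  linear_combination hmean

lemma abs_sub_sqrt_sq_sub_sq_div_lt_one {a b : ℝ} (hb : b ≠ 0) (hab : |b| < a) :
    |(a - √(a ^ 2 - b ^ 2)) / b| < 1 := by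
  have ha : 0 < a := (abs_nonneg b).trans_lt hab
  have hdisc : 0 < a ^ 2 - b ^ 2 := sub_pos.mpr (sq_lt_sq.mpr (hab.trans_le (le_abs_self a)))
  have hsq := sq_sqrt hdisc.le
  have hpos := sqrt_pos.mpr hdisc
  set s := √(a ^ 2 - b ^ 2)
  have hsa : s < a := by nlinarith [sq_pos_of_ne_zero hb]
  rw [abs_div, div_lt_one (abs_pos.mpr hb), ← sq_lt_sq]
  calc (a - s) ^ 2 < (a - s) * (a + s) := by nlinarith
    _ = b ^ 2 := by linear_combination -hsq

lemma mul_one_sub_two_mul_mul_add_sq_of_sq_eq_sq_sub_sq {K : Type*} [Field K] {a b s : K}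
    (hb : b ≠ 0) (hs : s ^ 2 = a ^ 2 - b ^ 2) (t : K) :
    s * (1 - 2 * ((a - s) / b) * t + ((a - s) / b) ^ 2) =
      (1 - ((a - s) / b) ^ 2) * (a - b * t) := by
  field_simp
  linear_combination (s - a + b * t) * hs

theorem integral_cos_nat_mul_div_sub_mul_cos {a b : ℝ} (hb : b ≠ 0) (hab : |b| < a) (n : ℕ) :
    ∫ φ in (0 : ℝ)..π, cos (n * φ) / (a - b * cos φ) =
      π / √(a ^ 2 - b ^ 2) * ((a - √(a ^ 2 - b ^ 2)) / b) ^ n := by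
  have hdisc : 0 < a ^ 2 - b ^ 2 := sub_pos.mpr (sq_lt_sq.mpr (hab.trans_le (le_abs_self a)))
  have hsq := sq_sqrt hdisc.le
  have hs : √(a ^ 2 - b ^ 2) ≠ 0 := (sqrt_pos.mpr hdisc).ne'
  have hr := abs_sub_sqrt_sq_sub_sq_div_lt_one hb hab
  set s := √(a ^ 2 - b ^ 2)
  set r := (a - s) / b
  have hden (φ : ℝ) : a - b * cos φ ≠ 0 := by
    have : b * cos φ ≤ |b| := (le_abs_self _).trans <| by
      rw [abs_mul]
      exact mul_le_of_le_one_right (abs_nonneg b) (abs_cos_le_one φ)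
    linarith
  have hkernel (φ : ℝ) :
      cos (n * φ) / (a - b * cos φ) =
        s⁻¹ * ((1 - r ^ 2) / (1 - 2 * r * cos φ + r ^ 2) * cos (n * φ)) := by
    rw [eq_inv_mul_iff_mul_eq₀ hs, div_mul_eq_mul_div, ← mul_div_assoc,
      div_eq_div_iff (hden φ) (one_sub_two_mul_mul_cos_add_sq_pos hr φ).ne']
    linear_combination
      cos (n * φ) * mul_one_sub_two_mul_mul_add_sq_of_sq_eq_sq_sub_sq hb hsq (cos φ)
  simp only [hkernel, intervalIntegral.integral_const_mul,
    integral_poissonKernel_mul_cos_nat_mul hr n]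
  ring

theorem integral_cos_lambda_div_one_sub_x_sub_two_x_cos_general (lam : ℕ) (x : ℝ)
    (hx₀ : x ≠ 0) (hx₁ : -1 < x) (hx₂ : x < 1 / 3)
    (ν : ℝ) (hν : ν = (1 - x - √(1 - 2 * x - 3 * x ^ 2)) / 2) :
    ∫ φ in (0 : ℝ)..π, cos (lam * φ) / (1 - x - 2 * x * cos φ) =
      (π / √(1 - 2 * x - 3 * x ^ 2)) * (ν / x) ^ lam := by
  have hab : |2 * x| < 1 - x := abs_lt.mpr ⟨by linarith, by linarith⟩
  have hdisc : (1 - x) ^ 2 - (2 * x) ^ 2 = 1 - 2 * x - 3 * x ^ 2 := by ring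
  rw [integral_cos_nat_mul_div_sub_mul_cos (mul_ne_zero two_ne_zero hx₀) hab, hdisc, hν, div_div]

theorem integral_cos_lambda_div_one_sub_x_sub_two_x_cos (lam : ℕ) (x : ℝ)
    (hx₁ : 0 < x) (hx₂ : x < 1 / 3)
    (ν : ℝ) (hν : ν = (1 - x - Real.sqrt (1 - 2 * x - 3 * x ^ 2)) / 2) :
    ∫ φ in (0:ℝ)..π, Real.cos (lam * φ) / (1 - x - 2 * x * Real.cos φ) =
      (π / Real.sqrt (1 - 2 * x - 3 * x ^ 2)) * (ν / x) ^ lam :=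
  integral_cos_lambda_div_one_sub_x_sub_two_x_cos_general lam x hx₁.ne' (by linarith) hx₂ ν hν
end
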